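/- arXiv:2510.01893 — 2 statements merged into one kernel-verified Lean document; each statement's English description precedes it below -/
import Mathlib

section
/- Let φ ∈ W^{1,1}([−1,1];ℝ^{2×2}) with φ(−1) = M, φ(1) = N and L_W(φ) < 3 d_W(M,N). Then for each α > 0 with α < γ(M,N,W,φ) := min{ |M−N|/2, (3 d_W(M,N) − L_W(φ))/(8L) }, where L is the Lipschitz constant of d_W on B_R(0)×B_R(0) with R = 2·max{|M|,|N|}, one has sup φ^{-1}(B_α(M)) < inf φ^{-1}(B_α(N)). -/
/-!
If `sup φ⁻¹(B_α(M)) ≥ inf φ⁻¹(B_α(N))`, then, with `t` the supremum and `s ≤ t` the infimum,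
continuity of `φ` gives `|φ(t) - M| ≤ α` and `|φ(s) - N| ≤ α`. The curve thus makes three crossings:
from `M` to `φ(s) ≈ N`, back to `φ(t) ≈ M`, and on to `N`. Each sub-arc is at least as long as the
`d_W`-distance of its endpoints (`dW_le_integral`), and by the Lipschitz bound the three distances
add up to at least `3 d_W(M,N) - 4Lα`; the points involved lie in `B_R(0)` because `α < |M - N|/2`.
This contradicts `8Lα < 3 d_W(M,N) - L_W(φ)`.
-/

noncomputable section

open MeasureTheory Set Filter

/-- The plane `ℝ²` with the Euclidean norm. -/
abbrev V2 : Type := EuclideanSpace ℝ (Fin 2)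

/-- The space of `2 × 2` real matrices with the Frobenius (Euclidean) norm;
an element `M` has entries `M (i, j)` and columns `m_j = (M (·, j))`. -/
abbrev M2 : Type := EuclideanSpace ℝ (Fin 2 × Fin 2)

/-- The point `(s, t) ∈ ℝ²`. -/
def pt (s t : ℝ) : V2 := (WithLp.equiv 2 (Fin 2 → ℝ)).symm ![s, t]

/-- The `j`-th column of a matrix. -/
def col (M : M2) (j : Fin 2) : V2 :=
  (WithLp.equiv 2 (Fin 2 → ℝ)).symm (fun i => M (i, j))

/-- The matrix with columns `v, w`. -/
def mkM (v w : V2) : M2 :=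
  (WithLp.equiv 2 (Fin 2 × Fin 2 → ℝ)).symm (fun p => if p.2 = 1 then w p.1 else v p.1)

/-- The well `A = a ⊗ e₂ = (0, a)`. -/
def wellA (a : V2) : M2 := mkM 0 a

/-- The reference quadratic double-well potential
`W₀(M) = |m₁|² + min{|m₂ - a|², |m₂ + a|²}`. -/
def W0 (a : V2) (M : M2) : ℝ :=
  ‖col M 0‖ ^ 2 + min (‖col M 1 - a‖ ^ 2) (‖col M 1 + a‖ ^ 2)

/-- The gradient `∇u(x)` of `u : ℝ² → ℝ²`, as a `2 × 2` matrix. -/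
def grad (u : V2 → V2) (x : V2) : M2 :=
  (WithLp.equiv 2 (Fin 2 × Fin 2 → ℝ)).symm
    (fun p => fderiv ℝ u x (EuclideanSpace.single p.2 (1:ℝ)) p.1)

/-- The squared Frobenius norm `|∇²u(x)|²` of the second gradient of `u`. -/
def hess2 (u : V2 → V2) (x : V2) : ℝ :=
  ∑ i : Fin 2, ∑ j : Fin 2, ∑ k : Fin 2,
    (fderiv ℝ (fun y => fderiv ℝ u y (EuclideanSpace.single k (1:ℝ)) i) x
      (EuclideanSpace.single j (1:ℝ))) ^ 2

/-- The singularly perturbed elastic energy `E_ε(u, Ω)`. -/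
def En (W : M2 → ℝ) (ε : ℝ) (u : V2 → V2) (Ω : Set V2) : ℝ :=
  ∫ x in Ω, (ε⁻¹ * W (grad u x) + ε * hess2 u x)

/-- A model for membership in `H²(Ω; ℝ²)`: twice continuously differentiable together
with the relevant integrability properties on `Ω`. -/
def MemH2 (u : V2 → V2) (Ω : Set V2) : Prop :=
  ContDiff ℝ 2 u ∧ IntegrableOn (fun x => ‖u x‖) Ω ∧
    IntegrableOn (fun x => ‖grad u x‖ ^ 2) Ω ∧ IntegrableOn (hess2 u) Ω

/-- The cylinder `ω_h = ω × (-h, h) ⊆ ℝ²`. -/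
def cyl (ω : Set ℝ) (h : ℝ) : Set V2 := {x | x 0 ∈ ω ∧ x 1 ∈ Ioo (-h) h}

/-- The limiting deformation `u₀(x) = Ax` for `x₂ > 0`, `Bx` for `x₂ ≤ 0`. -/
def u0 (a : V2) (x : V2) : V2 := if 0 < x 1 then (x 1) • a else (-(x 1)) • a

/-- An admissible sequence for the optimal profile energy on `ω_h`. -/
def AdmSeq (W : M2 → ℝ) (a : V2) (h : ℝ) (ω : Set ℝ)
    (u : ℕ → V2 → V2) (ε : ℕ → ℝ) : Prop :=
  (∀ n, 0 < ε n ∧ ε n < 1) ∧ Tendsto ε atTop (nhds 0) ∧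
  (∀ n, MemH2 (u n) (cyl ω h)) ∧
  Tendsto (fun n => ∫ x in cyl ω h, ‖u n x - u0 a x‖) atTop (nhds 0)

/-- The optimal profile constant `K*` (computed over the cylinder `(-1/2,1/2) × (-h,h)`). -/
def Kstar (W : M2 → ℝ) (a : V2) (h : ℝ) : ℝ :=
  sInf {r | ∃ u ε, AdmSeq W a h (Ioo (-(1:ℝ)/2) (1/2)) u ε ∧
    r = liminf (fun n => En W (ε n) (u n) (cyl (Ioo (-(1:ℝ)/2) (1/2)) h)) atTop}

/-- An optimal profile sequence with respect to `ω` (at height `h`): an admissible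
sequence attaining `lim_n E_{ε_n}(u_n, ω_h) = H¹(ω)·K*`. -/
def IsOptProfile (W : M2 → ℝ) (a : V2) (h : ℝ) (ω : Set ℝ)
    (u : ℕ → V2 → V2) (ε : ℕ → ℝ) : Prop :=
  AdmSeq W a h ω u ε ∧
  Tendsto (fun n => En W (ε n) (u n) (cyl ω h)) atTop
    (nhds ((volume ω).toReal * Kstar W a h))

/-- The unit cube `Q = (-1/2, 1/2)²`. -/
def Qset : Set V2 := cyl (Ioo (-(1:ℝ)/2) (1/2)) (1/2)

/-- The cell formula `K*_per` over gradients that are 1-periodic in `x₁` and agree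
with `∇u₀` near the horizontal boundary of the unit cube `Q`. -/
def KstarPer (W : M2 → ℝ) (a : V2) : ℝ :=
  sInf {r | ∃ (L : ℝ) (u : V2 → V2), 0 < L ∧ MemH2 u Qset ∧
    (∀ x : V2, grad u (x + pt 1 0) = grad u x) ∧
    (∀ x ∈ Qset, 1/4 < |x 1| →
      grad u x = (if 0 < x 1 then wellA a else -(wellA a))) ∧
    r = ∫ x in Qset, (L * W (grad u x) + L⁻¹ * hess2 u x)}

/-- A model of `W^{1,1}([-1,1]; ℝ^{2×2})` curves: `φ'` is a derivative of `φ` on `[-1,1]`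
with integrable norm. -/
def IsCurve (φ φ' : ℝ → M2) : Prop :=
  (∀ s ∈ Icc (-1:ℝ) 1, HasDerivWithinAt φ (φ' s) (Icc (-1:ℝ) 1) s) ∧
  IntegrableOn (fun s => ‖φ' s‖) (Icc (-1:ℝ) 1)

/-- The length `L_W(φ) = 2∫ √(W(φ))|φ'| ds` of a curve on `[-1,1]`. -/
def LW (W : M2 → ℝ) (φ φ' : ℝ → M2) : ℝ :=
  2 * ∫ s in Icc (-1:ℝ) 1, Real.sqrt (W (φ s)) * ‖φ' s‖

/-- The geodesic distance `d_W(M,N)` between two matrices. -/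
def dW (W : M2 → ℝ) (M N : M2) : ℝ :=
  sInf {r | ∃ φ φ', IsCurve φ φ' ∧ φ (-1) = M ∧ φ 1 = N ∧ r = LW W φ φ'}

/-- `L` is a Lipschitz constant for `d_W` on `B_R(0) × B_R(0)`. -/
def IsLipOn (W : M2 → ℝ) (L R : ℝ) : Prop :=
  ∀ M₁ M₂ N₁ N₂ : M2, ‖M₁‖ < R → ‖M₂‖ < R → ‖N₁‖ < R → ‖N₂‖ < R →
    |dW W M₁ N₁ - dW W M₂ N₂| ≤ L * (‖M₁ - M₂‖ + ‖N₁ - N₂‖)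

/-- The one-dimensional transition energy `I_ε(φ)` of a curve on `ℝ`. -/
def Icurve (W : M2 → ℝ) (ε : ℝ) (φ φ' : ℝ → M2) : ℝ :=
  ∫ s : ℝ, (ε⁻¹ * W (φ s) + ε * ‖φ' s‖ ^ 2)

/-- The phase separating point of a curve on `[-1,1]` running from `M` to `N`:
`s_φ^α = (sup φ⁻¹(B_α(M)) + inf φ⁻¹(B_α(N)))/2`. -/
def sSep (φ : ℝ → M2) (M N : M2) (α : ℝ) : ℝ :=
  (sSup {s | s ∈ Icc (-1:ℝ) 1 ∧ ‖φ s - M‖ < α} +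
    sInf {s | s ∈ Icc (-1:ℝ) 1 ∧ ‖φ s - N‖ < α}) / 2

/-- The phase separating point of a curve on `ℝ` running from `M` (at `-∞`) to `N`
(at `+∞`): `(sup φ⁻¹(B_α(M)) + inf φ⁻¹(B_α(N)))/2`. -/
def sSepLine (φ : ℝ → M2) (M N : M2) (α : ℝ) : ℝ :=
  (sSup {s | ‖φ s - M‖ < α} + sInf {s | ‖φ s - N‖ < α}) / 2

lemma IsCurve.continuousOn {φ φ' : ℝ → M2} (h : IsCurve φ φ') : ContinuousOn φ (Icc (-1) 1) :=
  fun s hs => (h.1 s hs).continuousWithinAt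

lemma IsCurve.integrableOn_length {W : M2 → ℝ} (hWc : Continuous W) {φ φ' : ℝ → M2}
    (h : IsCurve φ φ') :
    IntegrableOn (fun s => Real.sqrt (W (φ s)) * ‖φ' s‖) (Icc (-1) 1) :=
  h.2.continuousOn_mul
    (Real.continuous_sqrt.comp_continuousOn (hWc.comp_continuousOn h.continuousOn)) isCompact_Icc

lemma bddBelow_lengths (W : M2 → ℝ) (M N : M2) :
    BddBelow {r | ∃ φ φ', IsCurve φ φ' ∧ φ (-1) = M ∧ φ 1 = N ∧ r = LW W φ φ'} := by
  refine ⟨0, ?_⟩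
  rintro r ⟨φ, φ', -, -, -, rfl⟩
  exact mul_nonneg zero_le_two (integral_nonneg fun s => by positivity)

/-- The `d_W`-distance of two points of a curve is at most the length of the arc between them.
The arc may be run backwards (`q < p`) and may be degenerate (`p = q`): the competitor is
`x ↦ φ (c x + d)` with `c = (q - p) / 2`, `d = (p + q) / 2`, whatever the sign of `c`. -/
lemma dW_le_integral (W : M2 → ℝ) {φ φ' : ℝ → M2}
    (h : IsCurve φ φ') {p q : ℝ} (hp : p ∈ Icc (-1 : ℝ) 1) (hq : q ∈ Icc (-1 : ℝ) 1) :
    dW W (φ p) (φ q) ≤ 2 * |∫ s in p..q, Real.sqrt (W (φ s)) * ‖φ' s‖| := by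
  obtain ⟨c, hc⟩ : ∃ c, c = (q - p) / 2 := ⟨_, rfl⟩
  obtain ⟨d, hd⟩ : ∃ d, d = (p + q) / 2 := ⟨_, rfl⟩
  have e1 : c * (-1) + d = p := by rw [hc, hd]; ring
  have e2 : c * 1 + d = q := by rw [hc, hd]; ring
  have hmaps : MapsTo (fun x => c * x + d) (Icc (-1 : ℝ) 1) (Icc (-1 : ℝ) 1) := by
    rintro x ⟨hx1, hx2⟩
    -- `c * x + d` is the convex combination of `p`, `q` with weights `(1 - x)/2`, `(1 + x)/2`
    have : c * x + d = (1 - x) / 2 * p + (1 + x) / 2 * q := by rw [hc, hd]; ring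
    rw [mem_Icc]
    constructor <;> nlinarith [hp.1, hp.2, hq.1, hq.2]
  have hcurve : IsCurve (fun x => φ (c * x + d)) (fun x => c • φ' (c * x + d)) := by
    refine ⟨fun x hx => ?_, ?_⟩
    · have hlin : HasDerivWithinAt (fun x : ℝ => c * x + d) c (Icc (-1) 1) x := by
        simpa using (((hasDerivAt_id x).const_mul c).add_const d).hasDerivWithinAt
      exact (h.1 _ (hmaps hx)).scomp x hlin hmaps
    · by_cases hc0 : c = 0
      · simp [hc0]
      · have hpq : IntervalIntegrable (fun s => ‖φ' s‖) volume p q := by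
          rw [intervalIntegrable_iff]
          exact h.2.mono_set (uIoc_subset_uIcc.trans (uIcc_subset_Icc hp hq))
        have h1 : IntervalIntegrable (fun x => ‖φ' (c * x + d)‖) volume (-1) 1 := by
          have := (hpq.comp_add_right d).comp_mul_left (c := c)
          convert this using 1
          · rw [eq_div_iff hc0, ← e1]; ring
          · rw [eq_div_iff hc0, ← e2]; ring
        rw [integrableOn_Icc_iff_integrableOn_Ioc,
          ← intervalIntegrable_iff_integrableOn_Ioc_of_le (by norm_num)]
        simpa only [norm_smul] using h1.const_mul ‖c‖
  have hle : dW W (φ p) (φ q) ≤ LW W (fun x => φ (c * x + d)) (fun x => c • φ' (c * x + d)) :=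
    csInf_le (bddBelow_lengths W _ _) ⟨_, _, hcurve, by rw [e1], by rw [e2], rfl⟩
  refine hle.trans_eq ?_
  have hcv := intervalIntegral.smul_integral_comp_mul_add (a := -1) (b := 1)
    (f := fun s => Real.sqrt (W (φ s)) * ‖φ' s‖) c d
  rw [e1, e2, smul_eq_mul] at hcv
  rw [← hcv, abs_mul, abs_of_nonneg
    (intervalIntegral.integral_nonneg (by norm_num) fun s _ => by positivity), LW,
    integral_Icc_eq_integral_Ioc, ← intervalIntegral.integral_of_le (by norm_num),
    ← intervalIntegral.integral_const_mul |c|]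
  congr 1
  refine intervalIntegral.integral_congr fun x _ => ?_
  simp only [norm_smul, Real.norm_eq_abs]
  ring

/-- Three arcs of a curve, with the middle one run backwards. -/
lemma dW_add_dW_add_dW_le {W : M2 → ℝ} (hWc : Continuous W) {φ φ' : ℝ → M2}
    (h : IsCurve φ φ') {s t : ℝ} (hs : -1 ≤ s) (hst : s ≤ t) (ht : t ≤ 1) :
    dW W (φ (-1)) (φ s) + dW W (φ t) (φ s) + dW W (φ t) (φ 1) ≤ LW W φ φ' := by
  have m0 : (-1 : ℝ) ∈ Icc (-1 : ℝ) 1 := by simp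
  have m1 : (1 : ℝ) ∈ Icc (-1 : ℝ) 1 := by simp
  have ms : s ∈ Icc (-1 : ℝ) 1 := ⟨hs, hst.trans ht⟩
  have mt : t ∈ Icc (-1 : ℝ) 1 := ⟨hs.trans hst, ht⟩
  have hint : ∀ {p q : ℝ}, p ∈ Icc (-1 : ℝ) 1 → q ∈ Icc (-1 : ℝ) 1 →
      IntervalIntegrable (fun s => Real.sqrt (W (φ s)) * ‖φ' s‖) volume p q := by
    intro p q hp hq
    rw [intervalIntegrable_iff]
    exact (h.integrableOn_length hWc).mono_set (uIoc_subset_uIcc.trans (uIcc_subset_Icc hp hq))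
  have hnn : ∀ {p q : ℝ}, p ≤ q → 0 ≤ ∫ s in p..q, Real.sqrt (W (φ s)) * ‖φ' s‖ :=
    fun hpq => intervalIntegral.integral_nonneg hpq fun s _ => by positivity
  have h1 := dW_le_integral W h m0 ms
  have h2 := dW_le_integral W h mt ms
  have h3 := dW_le_integral W h mt m1
  rw [abs_of_nonneg (hnn hs)] at h1
  rw [intervalIntegral.integral_symm s t, abs_neg, abs_of_nonneg (hnn hst)] at h2
  rw [abs_of_nonneg (hnn ht)] at h3
  rw [LW, integral_Icc_eq_integral_Ioc, ← intervalIntegral.integral_of_le (by norm_num),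
    ← intervalIntegral.integral_add_adjacent_intervals (hint m0 ms) (hint ms m1),
    ← intervalIntegral.integral_add_adjacent_intervals (hint ms mt) (hint mt m1)]
  linarith

lemma IsCurve.isClosed_near {φ φ' : ℝ → M2} (h : IsCurve φ φ') (P : M2) (α : ℝ) :
    IsClosed {s | s ∈ Icc (-1 : ℝ) 1 ∧ ‖φ s - P‖ ≤ α} :=
  ((h.continuousOn.sub continuousOn_const).norm).preimage_isClosed_of_isClosed
    isClosed_Icc isClosed_Iic

/-- Let `φ ∈ W^{1,1}([-1,1]; ℝ^{2×2})` join `M` to `N` with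
`L_W(φ) < 3 d_W(M,N)`. Then for each `0 < α < γ(M,N,W,φ) = min{|M-N|/2, (3d_W(M,N)-L_W(φ))/(8L)}`,
where `L` is the Lipschitz constant of `d_W` on `B_R(0) × B_R(0)`, `R = 2 max{|M|,|N|}`,
one has `sup φ⁻¹(B_α(M)) < inf φ⁻¹(B_α(N))`. -/
theorem existence_of_phase_regions (a : V2) (ha : a ≠ 0) (W : M2 → ℝ)
    (hWnn : ∀ M, 0 ≤ W M) (hWc : Continuous W)
    (hwell : ∀ M, W M = 0 ↔ M = wellA a ∨ M = -(wellA a))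
    (C : ℝ) (hC : 0 < C)
    (hgrowth : ∀ M, C⁻¹ * W0 a M ≤ W M ∧ W M ≤ C * W0 a M)
    (M N : M2) (φ φ' : ℝ → M2) (hcurve : IsCurve φ φ')
    (hφM : φ (-1) = M) (hφN : φ 1 = N)
    (hlen : LW W φ φ' < 3 * dW W M N)
    (L : ℝ) (hL : 0 < L) (hLip : IsLipOn W L (2 * max ‖M‖ ‖N‖))
    (α : ℝ) (hα : 0 < α)
    (hαγ : α < min (‖M - N‖ / 2) ((3 * dW W M N - LW W φ φ') / (8 * L))) :
    sSup {s | s ∈ Icc (-1:ℝ) 1 ∧ ‖φ s - M‖ < α} <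
      sInf {s | s ∈ Icc (-1:ℝ) 1 ∧ ‖φ s - N‖ < α} := by
  by_contra! hcon
  have hα1 : α < ‖M - N‖ / 2 := hαγ.trans_le (min_le_left _ _)
  have hα2 : α * (8 * L) < 3 * dW W M N - LW W φ φ' :=
    (lt_div_iff₀ (by positivity)).1 (hαγ.trans_le (min_le_right _ _))
  obtain ⟨t, ht⟩ : ∃ t, t = sSup {s | s ∈ Icc (-1:ℝ) 1 ∧ ‖φ s - M‖ < α} := ⟨_, rfl⟩
  obtain ⟨s, hs⟩ : ∃ s, s = sInf {s | s ∈ Icc (-1:ℝ) 1 ∧ ‖φ s - N‖ < α} := ⟨_, rfl⟩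
  rw [← ht, ← hs] at hcon
  have htmem : t ∈ Icc (-1:ℝ) 1 ∧ ‖φ t - M‖ ≤ α := by
    rw [ht]
    have hsub : {s | s ∈ Icc (-1:ℝ) 1 ∧ ‖φ s - M‖ < α} ⊆
        {s | s ∈ Icc (-1:ℝ) 1 ∧ ‖φ s - M‖ ≤ α} := fun x hx => ⟨hx.1, hx.2.le⟩
    exact closure_minimal hsub (hcurve.isClosed_near M α)
      (csSup_mem_closure ⟨-1, by simp, by simpa [hφM] using hα⟩ ⟨1, fun x hx => hx.1.2⟩)
  have hsmem : s ∈ Icc (-1:ℝ) 1 ∧ ‖φ s - N‖ ≤ α := by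
    rw [hs]
    have hsub : {s | s ∈ Icc (-1:ℝ) 1 ∧ ‖φ s - N‖ < α} ⊆
        {s | s ∈ Icc (-1:ℝ) 1 ∧ ‖φ s - N‖ ≤ α} := fun x hx => ⟨hx.1, hx.2.le⟩
    exact closure_minimal hsub (hcurve.isClosed_near N α)
      (csInf_mem_closure ⟨1, by simp, by simpa [hφN] using hα⟩ ⟨-1, fun x hx => hx.1.1⟩)
  have hsum := dW_add_dW_add_dW_le hWc hcurve hsmem.1.1 hcon htmem.1.2
  rw [hφM, hφN] at hsum
  have hMle := le_max_left ‖M‖ ‖N‖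
  have hNle := le_max_right ‖M‖ ‖N‖
  have hMN := norm_sub_le M N
  -- all four points lie in `B_R(0)`, since `α < |M - N|/2 ≤ max |M| |N|`
  have bM : ‖M‖ < 2 * max ‖M‖ ‖N‖ := by linarith
  have bN : ‖N‖ < 2 * max ‖M‖ ‖N‖ := by linarith
  have bt : ‖φ t‖ < 2 * max ‖M‖ ‖N‖ := by
    linarith [norm_sub_norm_le (φ t) M, htmem.2]
  have bs : ‖φ s‖ < 2 * max ‖M‖ ‖N‖ := by
    linarith [norm_sub_norm_le (φ s) N, hsmem.2]
  have k1 := (abs_le.1 (hLip M M (φ s) N bM bM bs bN)).1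
  have k2 := (abs_le.1 (hLip (φ t) M (φ s) N bt bM bs bN)).1
  have k3 := (abs_le.1 (hLip (φ t) M N N bt bM bN bN)).1
  simp only [sub_self, norm_zero] at k1 k3
  have j1 := mul_le_mul_of_nonneg_left htmem.2 hL.le
  have j2 := mul_le_mul_of_nonneg_left hsmem.2 hL.le
  have j3 := mul_pos hL hα
  linarith
end
end

section
/- For W₀(M) = |m₁|² + min{|m₂−a|², |m₂+a|²} and its one-dimensional reduction W̃₀(M) = W₀(0, m₂), the geodesic distances between the wells coincide: d_{W̃₀}(A,B) = d_{W₀}(A,B); moreover, the geodesic from A to B with respect to W₀ is the straight line segment joining A and B, i.e., curves of the form t ↦ (0, ta). -/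
/-! Both distances equal `2|a|²`. The lower bound is a calibration argument. Write
`x = ⟨A, M⟩ / |a|²` for the normalised component of `m₂` along `a`. By Cauchy–Schwarz
`√W̃₀(M) ≥ |a| |1 - |x||` (`tent_le_sqrt_W0_proj2`), so along any curve `φ` from `A` to `-A` the
function `-|a|² tentPrim x`, where `tentPrim' = 1 - |x|`, has derivative at most `√W̃₀(φ) |φ'|`;
it increases by `|a|²` in total (`le_LW`). On the segment `t ↦ -tA` the integrand is exactly
`(1 - |t|)|a|²`, so the bound is attained (`LW_segment`). The argument applies to every
continuous `W ≥ W̃₀` that agrees with `W₀` on the line `ℝA`, hence to both potentials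
(`dW_eq`). -/

noncomputable section

open MeasureTheory Set Filter

/-- The projection of a matrix onto its second column: `(m₁, m₂) ↦ (0, m₂)`. -/
def proj2 (M : M2) : M2 :=
  (WithLp.equiv 2 (Fin 2 × Fin 2 → ℝ)).symm (fun p => if p.2 = 1 then M p else 0)

/-- The calibration: the primitive `x - x|x|/2` of the tent profile `1 - |x|`. -/
def tentPrim (x : ℝ) : ℝ := x - x * |x| / 2

lemma hasDerivAt_tentPrim (x : ℝ) : HasDerivAt tentPrim (1 - |x|) x := by
  have key : HasDerivAt (fun y : ℝ => y * |y|) (2 * |x|) x := by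
    rcases lt_trichotomy x 0 with hx | rfl | hx
    · have h := (hasDerivAt_pow 2 x).neg
      rw [abs_of_neg hx]
      refine (h.congr_of_eventuallyEq ?_).congr_deriv (by norm_num)
      filter_upwards [eventually_lt_nhds hx] with y hy
      simp only [abs_of_neg hy, Pi.neg_apply]; ring
    · rw [hasDerivAt_iff_tendsto_slope_zero]
      have hc : Tendsto (fun t : ℝ => |t|) (nhdsWithin 0 {0}ᶜ) (nhds (2 * |(0:ℝ)|)) := by
        have := (continuous_abs (G := ℝ)).tendsto 0
        simp only [abs_zero, mul_zero] at this ⊢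
        exact this.mono_left nhdsWithin_le_nhds
      refine hc.congr' ?_
      filter_upwards [self_mem_nhdsWithin] with t ht
      have ht' : t ≠ 0 := ht
      simp [ht']
    · have h := hasDerivAt_pow 2 x
      rw [abs_of_pos hx]
      refine (h.congr_of_eventuallyEq ?_).congr_deriv (by norm_num)
      filter_upwards [eventually_gt_nhds hx] with y hy
      simp only [abs_of_pos hy]; ring
  exact ((hasDerivAt_id x).sub (key.div_const 2)).congr_deriv (by ring)

lemma integral_tent : ∫ t in Icc (-1:ℝ) 1, (1 - |t|) = 1 := by
  rw [integral_Icc_eq_integral_Ioc, ← intervalIntegral.integral_of_le (by norm_num),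
    intervalIntegral.integral_eq_sub_of_hasDerivAt (fun x _ => hasDerivAt_tentPrim x)
      (Continuous.intervalIntegrable (by fun_prop) _ _)]
  norm_num [tentPrim]

lemma inner_wellA (a : V2) (M : M2) : inner ℝ (wellA a) M = inner ℝ a (col M 1) := by
  simp [PiLp.inner_apply, wellA, mkM, col, Fintype.sum_prod_type, Fin.sum_univ_two]

lemma col_wellA_one (a : V2) : col (wellA a) 1 = a := by
  ext i; simp [col, wellA, mkM]

lemma col_smul_wellA_zero (a : V2) (t : ℝ) : col (t • wellA a) 0 = 0 := by
  ext i; simp [col, wellA, mkM]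

lemma col_smul_wellA_one (a : V2) (t : ℝ) : col (t • wellA a) 1 = t • a := by
  ext i; simp [col, wellA, mkM]

lemma norm_wellA (a : V2) : ‖wellA a‖ = ‖a‖ := by
  have h := inner_wellA a (wellA a)
  rw [col_wellA_one, real_inner_self_eq_norm_sq, real_inner_self_eq_norm_sq] at h
  exact (sq_eq_sq₀ (norm_nonneg _) (norm_nonneg _)).1 h

lemma continuous_col (j : Fin 2) : Continuous fun M : M2 => col M j := by
  unfold col
  refine (PiLp.continuous_toLp 2 (fun _ : Fin 2 => ℝ)).comp ?_
  fun_prop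

lemma continuous_W0 (a : V2) : Continuous (W0 a) := by
  have h0 := continuous_col 0
  have h1 := continuous_col 1
  unfold W0
  fun_prop

lemma col_proj2_zero (M : M2) : col (proj2 M) 0 = 0 := by
  ext i; simp [col, proj2]

lemma col_proj2_one (M : M2) : col (proj2 M) 1 = col M 1 := by
  ext i; simp [col, proj2]

lemma W0_proj2 (a : V2) (M : M2) :
    W0 a (proj2 M) = min (‖col M 1 - a‖ ^ 2) (‖col M 1 + a‖ ^ 2) := by
  simp [W0, col_proj2_zero, col_proj2_one]

lemma W0_proj2_le (a : V2) (M : M2) : W0 a (proj2 M) ≤ W0 a M := by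
  rw [W0_proj2, W0]
  exact le_add_of_nonneg_left (sq_nonneg _)

lemma W0_smul_wellA (a : V2) (t : ℝ) :
    W0 a (t • wellA a) = ((1 - |t|) * ‖a‖) ^ 2 := by
  have h1 : t • a - a = (t - 1) • a := by rw [sub_smul, one_smul]
  have h2 : t • a + a = (t + 1) • a := by rw [add_smul, one_smul]
  rw [W0, col_smul_wellA_zero, col_smul_wellA_one, h1, h2, norm_smul, norm_smul,
    mul_pow, mul_pow, mul_pow, ← min_mul_of_nonneg _ _ (sq_nonneg ‖a‖)]
  simp only [Real.norm_eq_abs, sq_abs, norm_zero]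
  have : min ((t - 1) ^ 2) ((t + 1) ^ 2) = (1 - |t|) ^ 2 := by
    rcases abs_cases t with ⟨h, h'⟩ | ⟨h, h'⟩ <;> rw [h]
    · rw [min_eq_left (by nlinarith)]; ring
    · rw [min_eq_right (by nlinarith)]; ring
  rw [this]; ring

lemma proj2_smul_wellA (a : V2) (t : ℝ) : proj2 (t • wellA a) = t • wellA a := by
  ext ⟨i, j⟩
  fin_cases j <;> simp [proj2, wellA, mkM]

/-- The distance of `m₂` to the wells dominates that of its component along `a`, so the
one-dimensional tent profile bounds `√W̃₀` from below. -/
lemma tent_le_sqrt_W0_proj2 (a : V2) (ha : a ≠ 0) (M : M2) :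
    ‖a‖ * |1 - (|inner ℝ (wellA a) M / ‖a‖ ^ 2|)| ≤ √(W0 a (proj2 M)) := by
  have hpos : 0 < ‖a‖ := norm_pos_iff.2 ha
  have hx : inner ℝ a (col M 1) = (inner ℝ (wellA a) M / ‖a‖ ^ 2) * ‖a‖ ^ 2 := by
    rw [inner_wellA]; field_simp
  generalize inner ℝ (wellA a) M / ‖a‖ ^ 2 = x at hx ⊢
  have hm : ‖a‖ * |x - 1| ≤ ‖col M 1 - a‖ := by
    have h := abs_real_inner_le_norm a (col M 1 - a)
    rw [inner_sub_right, hx, real_inner_self_eq_norm_sq,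
      show x * ‖a‖ ^ 2 - ‖a‖ ^ 2 = ‖a‖ * (‖a‖ * (x - 1)) by ring, abs_mul, abs_mul,
      abs_of_pos hpos] at h
    exact le_of_mul_le_mul_left h hpos
  have hp : ‖a‖ * |x + 1| ≤ ‖col M 1 + a‖ := by
    have h := abs_real_inner_le_norm a (col M 1 + a)
    rw [inner_add_right, hx, real_inner_self_eq_norm_sq,
      show x * ‖a‖ ^ 2 + ‖a‖ ^ 2 = ‖a‖ * (‖a‖ * (x + 1)) by ring, abs_mul, abs_mul,
      abs_of_pos hpos] at h
    exact le_of_mul_le_mul_left h hpos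
  have e1 : |1 - (|x|)| ≤ |x - 1| := by
    have := abs_abs_sub_abs_le_abs_sub x 1
    rwa [abs_one, abs_sub_comm |x| 1] at this
  have e2 : |1 - (|x|)| ≤ |x + 1| := by
    have := abs_abs_sub_abs_le_abs_sub x (-1)
    rwa [abs_neg, abs_one, abs_sub_comm |x| 1, sub_neg_eq_add] at this
  apply Real.le_sqrt_of_sq_le
  rw [W0_proj2]
  refine le_min ?_ ?_
  · exact pow_le_pow_left₀ (by positivity) ((mul_le_mul_of_nonneg_left e1 hpos.le).trans hm) 2
  · exact pow_le_pow_left₀ (by positivity) ((mul_le_mul_of_nonneg_left e2 hpos.le).trans hp) 2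

/-- Calibration bound: along any curve from `A` to `-A`, the scalar `-tentPrim x`, with
`x = ⟨A, φ⟩ / |a|²`, increases by `1`, at a rate at most `√W(φ) |φ'| / |a|²`. -/
lemma le_LW {W : M2 → ℝ} (hW : Continuous W) (a : V2) (ha : a ≠ 0)
    (hlow : ∀ M, W0 a (proj2 M) ≤ W M) {φ φ' : ℝ → M2} (hφ : IsCurve φ φ')
    (h0 : φ (-1) = wellA a) (h1 : φ 1 = -(wellA a)) :
    2 * ‖a‖ ^ 2 ≤ LW W φ φ' := by
  have hpos : 0 < ‖a‖ := norm_pos_iff.2 ha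
  obtain ⟨hd, hint⟩ := hφ
  have hcont : ContinuousOn φ (Icc (-1:ℝ) 1) := fun s hs => (hd s hs).continuousWithinAt
  have hI : IntegrableOn (fun s => √(W (φ s)) * ‖φ' s‖) (Icc (-1:ℝ) 1) :=
    hint.continuousOn_mul ((Real.continuous_sqrt.comp hW).comp_continuousOn hcont) isCompact_Icc
  have hxd : ∀ s ∈ Icc (-1:ℝ) 1, HasDerivWithinAt
      (fun s => -(‖a‖ ^ 2 * tentPrim (inner ℝ (wellA a) (φ s) / ‖a‖ ^ 2)))
      (-(‖a‖ ^ 2 * ((1 - |inner ℝ (wellA a) (φ s) / ‖a‖ ^ 2|) *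
        (inner ℝ (wellA a) (φ' s) / ‖a‖ ^ 2)))) (Icc (-1:ℝ) 1) s := by
    intro s hs
    have hi : HasDerivWithinAt (fun s => inner ℝ (wellA a) (φ s) / ‖a‖ ^ 2)
        (inner ℝ (wellA a) (φ' s) / ‖a‖ ^ 2) (Icc (-1:ℝ) 1) s :=
      ((innerSL ℝ (wellA a)).hasFDerivAt.comp_hasDerivWithinAt s (hd s hs)).div_const _
    exact (((hasDerivAt_tentPrim _).comp_hasDerivWithinAt s hi).const_mul _).neg
  have key := intervalIntegral.sub_le_integral_of_hasDeriv_right_of_le (by norm_num : (-1:ℝ) ≤ 1)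
    (fun s hs => (hxd s hs).continuousWithinAt)
    (fun s hs => ((hxd s (Ioo_subset_Icc_self hs)).hasDerivAt
      (Icc_mem_nhds hs.1 hs.2)).hasDerivWithinAt) hI ?_
  · rw [h0, h1, inner_neg_right, real_inner_self_eq_norm_sq, norm_wellA, neg_div,
      div_self (by positivity), intervalIntegral.integral_of_le (by norm_num),
      ← integral_Icc_eq_integral_Ioc] at key
    norm_num [tentPrim] at key
    rw [LW]
    linarith
  · intro s _
    have b1 := (tent_le_sqrt_W0_proj2 a ha (φ s)).trans (Real.sqrt_le_sqrt (hlow (φ s)))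
    have b2 := abs_real_inner_le_norm (wellA a) (φ' s)
    rw [norm_wellA] at b2
    refine (neg_le_abs _).trans ?_
    rw [show ∀ u v : ℝ, ‖a‖ ^ 2 * (u * (v / ‖a‖ ^ 2)) = u * v by intros; field_simp, abs_mul]
    calc _ ≤ |1 - (|inner ℝ (wellA a) (φ s) / ‖a‖ ^ 2|)| * (‖a‖ * ‖φ' s‖) := by gcongr
      _ = (‖a‖ * |1 - (|inner ℝ (wellA a) (φ s) / ‖a‖ ^ 2|)|) * ‖φ' s‖ := by ring
      _ ≤ _ := by gcongr

lemma LW_segment {W : M2 → ℝ} (a : V2)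
    (hseg : ∀ t : ℝ, W (t • wellA a) = W0 a (t • wellA a)) :
    LW W (fun t => (-t) • wellA a) (fun _ => -(wellA a)) = 2 * ‖a‖ ^ 2 := by
  have h : ∫ s in Icc (-1:ℝ) 1, √(W ((-s) • wellA a)) * ‖-(wellA a)‖ =
      ∫ s in Icc (-1:ℝ) 1, (1 - |s|) * ‖a‖ ^ 2 := by
    refine setIntegral_congr_fun measurableSet_Icc fun s hs => ?_
    have hs' : |s| ≤ 1 := abs_le.2 hs
    have : 0 ≤ 1 - |s| := sub_nonneg.2 hs'
    simp only [hseg]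
    rw [W0_smul_wellA, abs_neg, Real.sqrt_sq (by positivity),
      norm_neg, norm_wellA]
    ring
  rw [LW, h, integral_mul_const, integral_tent, one_mul]

lemma isCurve_segment (a : V2) :
    IsCurve (fun t => (-t) • wellA a) (fun _ => -(wellA a)) := by
  refine ⟨fun s _ => ?_, integrableOn_const (by simp)⟩
  have := ((hasDerivAt_id s).neg.smul_const (wellA a)).hasDerivWithinAt (s := Icc (-1:ℝ) 1)
  simpa using this

/-- Any continuous `W ≥ W̃₀` agreeing with `W₀` on the line through the wells has geodesic
distance `2|a|²` between them. -/
lemma dW_eq {W : M2 → ℝ} (hW : Continuous W) (a : V2) (ha : a ≠ 0)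
    (hlow : ∀ M, W0 a (proj2 M) ≤ W M)
    (hseg : ∀ t : ℝ, W (t • wellA a) = W0 a (t • wellA a)) :
    dW W (wellA a) (-(wellA a)) = 2 * ‖a‖ ^ 2 := by
  refine IsLeast.csInf_eq ⟨⟨_, _, isCurve_segment a, by simp, by simp, (LW_segment a hseg).symm⟩, ?_⟩
  rintro r ⟨φ, φ', hφ, h0, h1, rfl⟩
  exact le_LW hW a ha hlow hφ h0 h1

/-- For the quadratic potential `W₀` and its one-dimensional reduction
`W̃₀(M) = W₀(0, m₂)`, the geodesic distances between the wells coincide,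
`d_{W̃₀}(A,B) = d_{W₀}(A,B)`; moreover the straight line segment `t ↦ (0, -ta)` joining
`A` to `B` is a geodesic for `W₀`, i.e. its length attains `d_{W₀}(A,B)`. -/
theorem oneD_reduction_of_quadratic_geodesic (a : V2) (ha : a ≠ 0) :
    dW (fun M => W0 a (proj2 M)) (wellA a) (-(wellA a)) =
      dW (W0 a) (wellA a) (-(wellA a)) ∧
    LW (W0 a) (fun t => (-t) • wellA a) (fun _ => -(wellA a)) =
      dW (W0 a) (wellA a) (-(wellA a)) := by
  have h0 := dW_eq (continuous_W0 a) a ha (W0_proj2_le a) (fun _ => rfl)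
  have hc : Continuous fun M => W0 a (proj2 M) := by
    have h1 := continuous_col 1
    simp only [W0_proj2]
    fun_prop
  have h1 := dW_eq hc a ha (fun _ => le_rfl) (fun t => by rw [proj2_smul_wellA])
  exact ⟨h1.trans h0.symm, (LW_segment a fun _ => rfl).trans h0.symm⟩
end
end
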